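/- The palindrome complexity of the simple Toeplitz subshift is given as follows. For 1 ≤ L ≤ |p_0|: P(L) = (#A_0 − 1)·(L mod 2) + 1. For k ≥ 1 and |p_{k−1}| + 1 ≤ L ≤ |p_k|, writing r := L mod (|p_{k−1}| + 1) and r̃ := L mod (|p_{k−2}| + 1): P(L) = (#A_k − 1)·(L mod 2) + ((|p_{k−1}| + 1 − r) mod 2) + (r mod 2)·c₁ + c₂ (arithmetic in ℤ), where c₁ = 1 if |p_{k−1}| + 1 ≤ L ≤ |p_k| − |p_{k−1}| − 1 and c₁ = 𝟙_{A_{k+1}}(a_k) if |p_k| − |p_{k−1}| ≤ L ≤ |p_k|, and where c₂ = 0 if a_{k−1} ∉ A_k or L > 2|p_{k−1}| − |p_{k−2}|, while c₂ = (r̃ mod 2) + ((|p_{k−2}| + 1 − r̃) mod 2) − (L mod 2) if a_{k−1} ∈ A_k and L ≤ 2|p_{k−1}| − |p_{k−2}|. -/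

import Mathlib

/-!
Say that an integer `t ≠ 0` has level `k` if `k` is largest with `M k ∣ t`, where
`M k = n 0 ⋯ n (k-1) = |p (k-1)| + 1`. The block `p k` is the sequence `t ↦ a (level t)` on
`0 < t < M (k+1)`, so the language consists of the windows of this sequence at positive positions,
and statements about words become statements about divisibility.

Fix `M k ≤ L < M (k+1)`. The levels are symmetric under `t ↦ -t`, so a window which is a palindrome
about `c/2` agrees with its translate by `-c`. A word of length at least `M k` determines the copies
of `p (k-1)` inside it up to multiples of `M (k-1)`, and even of `M k` unless all the separating
letters inside it are `a (k-1)`. Hence `c` is a multiple of `M (k-1)`, and the palindrome is one of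

* a word centred on a separating letter `x`, for `L` odd. Here `x ∈ A_{k+1}`, or `x = a k` if
  `p k` contains a sufficiently long window around one of its letters `a k`;
* the word centred on the centre of a copy of `p (k-1)` with all separating letters equal to `a k`,
  for `L + M k` odd. It has to fit into `p k` unless `a k ∈ A_{k+1}`;
* the word centred on the centre of a copy of `p (k-2)` inside `p (k-1) a_{k-1} p (k-1)`, for
  `L + M (k-1)` odd. It requires `a (k-1) ∈ A_k` and `L ≤ 2|p (k-1)| - |p (k-2)|`.

By the same synchronisation these words are pairwise distinct, and the formula follows from their
number by comparing the parities of `L`, `M k` and `L mod M k`.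
-/

open Filter

/-- The blocks `p k` of the simple Toeplitz subshift coded by `a` and `n`:
`p 0 = a 0 ^ (n 0 - 1)` and `p (k+1)` consists of `n (k+1)` copies of `p k`
separated by `n (k+1) - 1` single letters `a (k+1)`. -/
def ToeplitzBlock {A : Type*} (a : ℕ → A) (n : ℕ → ℕ) : ℕ → List A
  | 0 => List.replicate (n 0 - 1) (a 0)
  | k + 1 => List.intercalate [a (k + 1)] (List.replicate (n (k + 1)) (ToeplitzBlock a n k))

/-- `lenPrev a n k = |p (k-1)|`, with the convention `|p (-1)| = 0`. -/
def lenPrev {A : Type*} (a : ℕ → A) (n : ℕ → ℕ) : ℕ → ℕ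
  | 0 => 0
  | k + 1 => (ToeplitzBlock a n k).length

/-- The language of the simple Toeplitz subshift: all finite words occurring as a
factor of some block `p k`. -/
def ToeplitzLang {A : Type*} (a : ℕ → A) (n : ℕ → ℕ) : Set (List A) :=
  {u | ∃ k, u <:+: ToeplitzBlock a n k}

/-- The complexity function `C L`. -/
noncomputable def cmpl {A : Type*} (a : ℕ → A) (n : ℕ → ℕ) (L : ℕ) : ℕ :=
  Set.ncard {u | u ∈ ToeplitzLang a n ∧ u.length = L}

/-- The palindrome complexity function `P L`. -/
noncomputable def palCmpl {A : Type*} (a : ℕ → A) (n : ℕ → ℕ) (L : ℕ) : ℕ :=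
  Set.ncard {u | u ∈ ToeplitzLang a n ∧ u.length = L ∧ u.reverse = u}

/-- `Ak a k = {a j : j ≥ k}`. -/
def Ak {A : Type*} (a : ℕ → A) (k : ℕ) : Set A := {x | ∃ j, k ≤ j ∧ a j = x}

/-- The eventual alphabet `A_ev = ⋂ k, A_k`. -/
def Aev {A : Type*} (a : ℕ → A) : Set A := ⋂ k, Ak a k

/-- `Kf a k = min {j > k : {a (k+1), …, a j} = A (k+1)}`. -/
noncomputable def Kf {A : Type*} (a : ℕ → A) (k : ℕ) : ℕ :=
  sInf {j | k < j ∧ {x | ∃ i, k + 1 ≤ i ∧ i ≤ j ∧ a i = x} = Ak a (k + 1)}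

/-- The positions `m i` at which `Kf` increases: `m 0 = 0` and
`m (i+1) = min {j > m i : Kf j > Kf (m i)}`. -/
noncomputable def mseq {A : Type*} (a : ℕ → A) : ℕ → ℕ
  | 0 => 0
  | i + 1 => sInf {j | mseq a i < j ∧ Kf a (mseq a i) < Kf a j}

/-- The repetitivity function `R L`: the least `L'` such that every word of
length `L` of the language is a factor of every word of length `L'`. -/
noncomputable def repet {A : Type*} (a : ℕ → A) (n : ℕ → ℕ) (L : ℕ) : ℕ :=
  sInf {L' | ∀ u ∈ ToeplitzLang a n, u.length = L →
    ∀ w ∈ ToeplitzLang a n, w.length = L' → u <:+: w}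

namespace SimpleToeplitz

variable {A : Type*} {a : ℕ → A} {n : ℕ → ℕ}

/-- The period `n 0 * ⋯ * n (k-1) = |p (k-1)| + 1`; in particular `period n 0 = 1`. It is an integer
because positions in two-sided sequences are. -/
def period (n : ℕ → ℕ) (k : ℕ) : ℤ := ∏ i ∈ Finset.range k, (n i : ℤ)

/-- The level of an integer `t ≠ 0` is the largest `k` with `period n k ∣ t`, encoded as the least
`k` with `¬ period n (k + 1) ∣ t`. At `t = 0` it takes the junk value `0`. -/
noncomputable def level (n : ℕ → ℕ) (t : ℤ) : ℕ := sInf {k : ℕ | ¬ period n (k + 1) ∣ t}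

/-- The two-sided Toeplitz sequence, which carries the letter `a k` at the positions of level `k`.
The position `0` is a hole; its letter is junk. -/
noncomputable def toeplitzSeq (a : ℕ → A) (n : ℕ → ℕ) (t : ℤ) : A := a (level n t)

/-! ### Periods and levels -/

lemma period_zero (n : ℕ → ℕ) : period n 0 = 1 := Finset.prod_range_zero _

lemma period_succ (n : ℕ → ℕ) (k : ℕ) : period n (k + 1) = period n k * n k :=
  Finset.prod_range_succ _ _

lemma period_dvd_period {j k : ℕ} (h : j ≤ k) : period n j ∣ period n k :=
  Finset.prod_dvd_prod_of_subset _ _ _ (Finset.range_subset_range.2 h)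

lemma period_pos (hn : ∀ k, 2 ≤ n k) (k : ℕ) : 0 < period n k :=
  Finset.prod_pos fun i _ => by have := hn i; omega

lemma exists_natCast_add_one_eq_period (hn : ∀ k, 2 ≤ n k) (k : ℕ) :
    ∃ N : ℕ, (N : ℤ) + 1 = period n k :=
  ⟨(period n k - 1).toNat, by have := period_pos hn k; omega⟩

lemma two_mul_period_le (hn : ∀ k, 2 ≤ n k) (k : ℕ) : 2 * period n k ≤ period n (k + 1) := by
  rw [period_succ, mul_comm]
  exact mul_le_mul_of_nonneg_left (by exact_mod_cast hn k) (period_pos hn k).le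

lemma lt_period (hn : ∀ k, 2 ≤ n k) (k : ℕ) : (k : ℤ) < period n k := by
  induction k with
  | zero => simp [period_zero]
  | succ k ih =>
    have := two_mul_period_le hn k
    omega

lemma not_period_succ_dvd_period (hn : ∀ k, 2 ≤ n k) (k : ℕ) :
    ¬ period n (k + 1) ∣ period n k := fun h => by
  have := Int.le_of_dvd (period_pos hn k) h
  have := two_mul_period_le hn k
  have := period_pos hn k
  omega

lemma period_dvd_iff_le_level (hn : ∀ k, 2 ≤ n k) {t : ℤ} (ht : t ≠ 0) {k : ℕ} :
    period n k ∣ t ↔ k ≤ level n t := by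
  have hne : {k : ℕ | ¬ period n (k + 1) ∣ t}.Nonempty := by
    refine ⟨t.natAbs, fun h => ht (Int.eq_zero_of_abs_lt_dvd h ?_)⟩
    have := lt_period hn (t.natAbs + 1)
    rw [Int.abs_eq_natAbs]
    omega
  constructor
  · intro h
    by_contra! hlt
    exact Nat.sInf_mem hne ((period_dvd_period hlt).trans h)
  · intro h
    obtain _ | k := k
    · exact period_zero n ▸ one_dvd t
    · exact not_not.1 (Nat.notMem_of_lt_sInf (Nat.lt_of_succ_le h))

lemma level_eq (hn : ∀ k, 2 ≤ n k) {t : ℤ} {k : ℕ} (h : period n k ∣ t)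
    (h' : ¬ period n (k + 1) ∣ t) : level n t = k := by
  have ht : t ≠ 0 := by rintro rfl; exact h' (dvd_zero _)
  rw [period_dvd_iff_le_level hn ht] at h h'
  omega

lemma level_add (hn : ∀ k, 2 ≤ n k) {t d : ℤ} {k : ℕ} (ht : ¬ period n k ∣ t)
    (hd : period n k ∣ d) : level n (t + d) = level n t := by
  have h0 : t ≠ 0 := by rintro rfl; exact ht (dvd_zero _)
  have hk : level n t < k := not_le.1 ((period_dvd_iff_le_level hn h0).not.1 ht)
  refine level_eq hn ?_ ?_
  · exact dvd_add ((period_dvd_iff_le_level hn h0).2 le_rfl) ((period_dvd_period hk.le).trans hd)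
  · rw [dvd_add_left ((period_dvd_period hk).trans hd), period_dvd_iff_le_level hn h0]
    omega

lemma level_neg (n : ℕ → ℕ) (t : ℤ) : level n (-t) = level n t := by
  simp only [level, dvd_neg]

lemma toeplitzSeq_eq (hn : ∀ k, 2 ≤ n k) {t : ℤ} {k : ℕ} (h : period n k ∣ t)
    (h' : ¬ period n (k + 1) ∣ t) : toeplitzSeq a n t = a k :=
  congrArg a (level_eq hn h h')

lemma toeplitzSeq_period (hn : ∀ k, 2 ≤ n k) (k : ℕ) : toeplitzSeq a n (period n k) = a k :=
  toeplitzSeq_eq hn dvd_rfl (not_period_succ_dvd_period hn k)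

lemma toeplitzSeq_add (hn : ∀ k, 2 ≤ n k) {t d : ℤ} {k : ℕ} (ht : ¬ period n k ∣ t)
    (hd : period n k ∣ d) : toeplitzSeq a n (t + d) = toeplitzSeq a n t :=
  congrArg a (level_add hn ht hd)

lemma toeplitzSeq_neg (a : ℕ → A) (n : ℕ → ℕ) (t : ℤ) :
    toeplitzSeq a n (-t) = toeplitzSeq a n t :=
  congrArg a (level_neg n t)

lemma toeplitzSeq_mem_Ak (hn : ∀ k, 2 ≤ n k) {t : ℤ} (ht : t ≠ 0) {k : ℕ} (h : period n k ∣ t) :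
    toeplitzSeq a n t ∈ Ak a k :=
  ⟨level n t, (period_dvd_iff_le_level hn ht).1 h, rfl⟩

/-! ### Blocks and the language as windows of the Toeplitz sequence -/

/-- The word `f s, f (s + 1), …, f (s + L - 1)` read in a two-sided sequence `f`. -/
def window (f : ℤ → A) (s : ℤ) (L : ℕ) : List A := (List.range L).map fun i : ℕ => f (s + i)

@[simp]
lemma length_window (f : ℤ → A) (s : ℤ) (L : ℕ) : (window f s L).length = L := by simp [window]

lemma window_add (f : ℤ → A) (s : ℤ) (L L' : ℕ) :
    window f s (L + L') = window f s L ++ window f (s + L) L' := by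
  simp [window, List.range_add, Function.comp_def, add_assoc]

lemma window_eq_window_iff {f g : ℤ → A} {s d : ℤ} {L : ℕ} :
    window f s L = window g (s + d) L ↔ ∀ t, s ≤ t → t < s + L → f t = g (t + d) := by
  simp only [window, List.map_inj_left, List.mem_range]
  constructor
  · intro h t h1 h2
    have := h (t - s).toNat (by omega)
    rwa [Int.toNat_of_nonneg (by omega), add_right_comm, add_sub_cancel] at this
  · intro h i hi
    rw [h (s + i) (by omega) (by omega), add_right_comm]

lemma infix_window_iff {f : ℤ → A} {s : ℤ} {N : ℕ} {u : List A} :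
    u <:+: window f s N ↔ ∃ t, s ≤ t ∧ t + u.length ≤ s + N ∧ u = window f t u.length := by
  constructor
  · rintro ⟨l, r, h⟩
    have hN : l.length + u.length + r.length = N := by
      simpa only [List.length_append, length_window] using congrArg List.length h
    rw [← hN, window_add, window_add] at h
    have hlu := (List.append_inj h (by simp)).1
    exact ⟨s + l.length, by omega, by omega, (List.append_inj hlu (by simp)).2⟩
  · rintro ⟨t, hst, htN, hu⟩
    obtain ⟨i, rfl⟩ : ∃ i : ℕ, t = s + i := ⟨(t - s).toNat, by omega⟩
    obtain ⟨j, rfl⟩ : ∃ j, N = i + u.length + j := Nat.exists_eq_add_of_le (by omega)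
    rw [window_add, window_add, ← hu]
    exact List.infix_append _ _ _

lemma intercalate_replicate_eq_window {f : ℤ → A} {x : A} {w : List A} {N r : ℕ} {s : ℤ}
    (hw : ∀ j : ℕ, j ≤ r → window f (s + j * (N + 1)) N = w)
    (hx : ∀ j : ℕ, j < r → f (s + j * (N + 1) + N) = x) :
    List.intercalate [x] (List.replicate (r + 1) w) = window f s (r * (N + 1) + N) := by
  induction r generalizing s with
  | zero => simpa using (hw 0 le_rfl).symm
  | succ r ih =>
    have htail := ih (s := s + (N + 1 : ℕ))
      (fun j hj => by rw [← hw (j + 1) (by omega)]; congr 1; push_cast; ring)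
      (fun j hj => by rw [← hx (j + 1) (by omega)]; congr 1; push_cast; ring)
    have hhead : window f s N = w := by simpa using hw 0 (by omega)
    have hsep : window f (s + N) 1 = [x] := by simpa [window] using hx 0 (by omega)
    rw [List.replicate_succ, List.intercalate_cons_of_ne_nil (by simp), htail,
      show (r + 1) * (N + 1) + N = N + 1 + (r * (N + 1) + N) by ring,
      window_add _ _ (N + 1), window_add _ _ N, hhead, hsep]

lemma intercalate_replicate_window_toeplitzSeq (hn : ∀ k, 2 ≤ n k) {k N : ℕ}
    (hN : (N : ℤ) + 1 = period n k) {r : ℕ} (hr : r + 1 ≤ n k) :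
    List.intercalate [a k] (List.replicate (r + 1) (window (toeplitzSeq a n) 1 N)) =
      window (toeplitzSeq a n) 1 (r * (N + 1) + N) := by
  refine intercalate_replicate_eq_window (fun j _ => ?_) (fun j hj => ?_)
  · refine (window_eq_window_iff.2 fun t h1 h2 => (toeplitzSeq_add hn (k := k) ?_ ?_).symm).symm
    · exact fun h => by have := Int.le_of_dvd (by omega) h; omega
    · exact hN ▸ dvd_mul_left _ _
  · rw [show 1 + (j : ℤ) * (N + 1) + N = period n k * (j + 1) by rw [← hN]; ring]
    refine toeplitzSeq_eq hn (dvd_mul_right _ _) ?_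
    rw [period_succ, mul_dvd_mul_iff_left (period_pos hn k).ne']
    exact fun h => by have := Int.le_of_dvd (by omega) h; omega

lemma block_eq_window (hn : ∀ k, 2 ≤ n k) {k N : ℕ} (hN : (N : ℤ) + 1 = period n (k + 1)) :
    ToeplitzBlock a n k = window (toeplitzSeq a n) 1 N := by
  induction k generalizing N with
  | zero =>
    rw [zero_add, period_succ, period_zero, one_mul] at hN
    obtain rfl : N = n 0 - 1 := by omega
    refine (List.eq_replicate_iff.2 ⟨length_window _ _ _, ?_⟩).symm
    simp only [window, List.mem_map, List.mem_range]
    rintro _ ⟨i, hi, rfl⟩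
    refine toeplitzSeq_eq hn (period_zero (n := n) ▸ one_dvd _) fun h => ?_
    rw [period_succ, period_zero, one_mul] at h
    have := Int.le_of_dvd (by omega) h
    omega
  | succ k ih =>
    obtain ⟨K, hK⟩ := exists_natCast_add_one_eq_period hn (k + 1)
    obtain ⟨r, hr⟩ : ∃ r, n (k + 1) = r + 1 :=
      ⟨n (k + 1) - 1, by have := hn (k + 1); omega⟩
    obtain rfl : N = r * (K + 1) + K := by
      rw [period_succ, ← hK, hr] at hN
      zify
      push_cast at hN
      linarith
    rw [ToeplitzBlock, ih hK, hr]
    exact intercalate_replicate_window_toeplitzSeq hn hK hr.ge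

lemma length_block_add_one (hn : ∀ k, 2 ≤ n k) (k : ℕ) :
    ((ToeplitzBlock a n k).length : ℤ) + 1 = period n (k + 1) := by
  obtain ⟨N, hN⟩ := exists_natCast_add_one_eq_period hn (k + 1)
  rw [block_eq_window hn hN, length_window, hN]

lemma lenPrev_add_one (hn : ∀ k, 2 ≤ n k) (k : ℕ) : (lenPrev a n k : ℤ) + 1 = period n k := by
  cases k with
  | zero => simp [lenPrev, period_zero]
  | succ k => exact length_block_add_one hn k

lemma mem_toeplitzLang_iff (hn : ∀ k, 2 ≤ n k) {u : List A} :
    u ∈ ToeplitzLang a n ↔ ∃ s : ℤ, 1 ≤ s ∧ u = window (toeplitzSeq a n) s u.length := by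
  constructor
  · rintro ⟨k, hk⟩
    rw [block_eq_window hn (length_block_add_one (a := a) hn k), infix_window_iff] at hk
    obtain ⟨s, hs, -, hu⟩ := hk
    exact ⟨s, hs, hu⟩
  · rintro ⟨s, hs, hu⟩
    obtain ⟨k, hk⟩ : ∃ k : ℕ, s + u.length = k := ⟨_, (Int.toNat_of_nonneg (by omega)).symm⟩
    obtain ⟨N, hN⟩ := exists_natCast_add_one_eq_period hn (k + 1)
    have := lt_period hn (k + 1)
    refine ⟨k, ?_⟩
    rw [block_eq_window hn hN, infix_window_iff]
    exact ⟨s, hs, by omega, hu⟩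

/-! ### Words given by their centre -/

/-- The positions `t` at distance less than `L / 2` from `c / 2`. For `c + L` odd these are the `L`
consecutive positions centred at the (half-)integer `c / 2`. -/
def centeredInterval (c L : ℤ) : Set ℤ := {t | c - L < 2 * t ∧ 2 * t < c + L}

/-- The word of length `L` that `f` carries around the (half-)integer `c / 2`. It is only meaningful
for `c + L` odd. -/
def centeredWord (f : ℤ → A) (c : ℤ) (L : ℕ) : List A := window f ((c - L + 1) / 2) L

@[simp]
lemma length_centeredWord (f : ℤ → A) (c : ℤ) (L : ℕ) : (centeredWord f c L).length = L :=
  length_window _ _ _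

lemma centeredWord_eq_iff {f g : ℤ → A} {c d : ℤ} {L : ℕ} (hc : (c + L) % 2 = 1) :
    centeredWord f c L = centeredWord g (c + 2 * d) L ↔
      ∀ t ∈ centeredInterval c L, f t = g (t + d) := by
  rw [centeredWord, centeredWord, show (c + 2 * d - L + 1) / 2 = (c - L + 1) / 2 + d by omega,
    window_eq_window_iff]
  constructor
  · rintro h t ⟨h1, h2⟩
    exact h t (by omega) (by omega)
  · intro h t h1 h2
    exact h t ⟨by omega, by omega⟩

lemma centeredWord_eq_iff_eqOn {f g : ℤ → A} {c : ℤ} {L : ℕ} (hc : (c + L) % 2 = 1) :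
    centeredWord f c L = centeredWord g c L ↔ Set.EqOn f g (centeredInterval c L) := by
  simpa only [mul_zero, add_zero, Set.EqOn] using centeredWord_eq_iff (f := f) (g := g) (d := 0) hc

lemma reverse_centeredWord {f : ℤ → A} {c : ℤ} {L : ℕ} (hc : (c + L) % 2 = 1) :
    (centeredWord f c L).reverse = centeredWord (fun t => f (c - t)) c L := by
  refine List.ext_getElem (by simp) fun i hi _ => ?_
  rw [List.length_reverse, length_centeredWord] at hi
  simp only [centeredWord, window, List.getElem_reverse, List.getElem_map, List.getElem_range,
    List.length_map, List.length_range]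
  congr 1
  omega

lemma reverse_centeredWord_eq_iff {f : ℤ → A} {c : ℤ} {L : ℕ} (hc : (c + L) % 2 = 1) :
    (centeredWord f c L).reverse = centeredWord f c L ↔
      ∀ t ∈ centeredInterval c L, f (c - t) = f t := by
  rw [reverse_centeredWord hc, centeredWord_eq_iff_eqOn hc]
  rfl

lemma exists_mem_centeredInterval_dvd {m c L : ℤ} (hm : 0 < m) (hmL : m ≤ L)
    (hc : (c + L) % 2 = 1) : ∃ t ∈ centeredInterval c L, m ∣ t := by
  obtain ⟨s, hs⟩ : ∃ s, c - L + 1 = 2 * s := ⟨(c - L + 1) / 2, by omega⟩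
  have h0 := Int.emod_nonneg (-s) hm.ne'
  have h1 := Int.emod_lt_of_pos (-s) hm
  refine ⟨s + -s % m, ⟨by omega, by omega⟩, ?_⟩
  rw [← dvd_neg, neg_add']
  exact Int.dvd_self_sub_emod

lemma exists_mem_centeredInterval_dvd_not_dvd (hn : ∀ k, 2 ≤ n k) {k : ℕ} {c L : ℤ}
    (hL : 2 * period n k ≤ L) (hc : (c + L) % 2 = 1) :
    ∃ t ∈ centeredInterval c L, period n k ∣ t ∧ ¬ period n (k + 1) ∣ t := by
  have hpos := period_pos hn k
  obtain ⟨t, ⟨h1, h2⟩, ht⟩ := exists_mem_centeredInterval_dvd (m := period n k)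
    (c := c - period n k) (L := L - period n k) hpos (by omega) (by omega)
  by_cases ht' : period n (k + 1) ∣ t
  · refine ⟨t + period n k, ⟨by omega, by omega⟩, dvd_add ht dvd_rfl, ?_⟩
    rw [dvd_add_right ht']
    exact not_period_succ_dvd_period hn k
  · exact ⟨t, ⟨by omega, by omega⟩, ht, ht'⟩

lemma mem_toeplitzLang_iff_exists_centeredWord (hn : ∀ k, 2 ≤ n k) {u : List A} :
    u ∈ ToeplitzLang a n ↔ ∃ c : ℤ, (c + u.length) % 2 = 1 ∧ u.length < c ∧
      u = centeredWord (toeplitzSeq a n) c u.length := by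
  rw [mem_toeplitzLang_iff hn]
  constructor
  · rintro ⟨s, hs, hu⟩
    refine ⟨2 * s + u.length - 1, by omega, by omega, ?_⟩
    rwa [centeredWord, show (2 * s + u.length - 1 - u.length + 1) / 2 = s by omega]
  · rintro ⟨c, hc, hlt, hu⟩
    exact ⟨_, by omega, hu⟩

lemma centeredWord_mem_toeplitzLang (hn : ∀ k, 2 ≤ n k) {f : ℤ → A} {c d : ℤ} {L : ℕ}
    (hc : (c + L) % 2 = 1) (hlt : L < c + 2 * d)
    (h : ∀ t ∈ centeredInterval c L, f t = toeplitzSeq a n (t + d)) :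
    centeredWord f c L ∈ ToeplitzLang a n := by
  rw [mem_toeplitzLang_iff_exists_centeredWord hn, length_centeredWord]
  exact ⟨c + 2 * d, by omega, hlt, (centeredWord_eq_iff hc).2 h⟩

/-! ### Synchronisation -/

/-- `f` agrees with the Toeplitz sequence off the multiples of `period n k`: it consists of copies
of `p (k-1)` separated by arbitrary letters. -/
def IsGrid (a : ℕ → A) (n : ℕ → ℕ) (k : ℕ) (f : ℤ → A) : Prop :=
  ∀ t, ¬ period n k ∣ t → f t = toeplitzSeq a n t

lemma IsGrid.mono {j k : ℕ} {f : ℤ → A} (hf : IsGrid a n k f) (h : j ≤ k) : IsGrid a n j f :=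
  fun t ht => hf t fun hd => ht ((period_dvd_period h).trans hd)

lemma isGrid_toeplitzSeq (a : ℕ → A) (n : ℕ → ℕ) (k : ℕ) : IsGrid a n k (toeplitzSeq a n) :=
  fun _ _ => rfl

lemma IsGrid.apply_add_eq (hn : ∀ k, 2 ≤ n k) {k : ℕ} {g : ℤ → A} (hg : IsGrid a n (k + 1) g)
    {t d : ℤ} (ht : period n (k + 1) ∣ t) (hd : period n k ∣ d) (hd' : ¬ period n (k + 1) ∣ d) :
    g (t + d) = a k := by
  have hnot : ¬ period n (k + 1) ∣ t + d := by rwa [dvd_add_right ht]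
  rw [hg _ hnot, toeplitzSeq_eq hn (dvd_add ((period_dvd_period k.le_succ).trans ht) hd) hnot]

lemma IsGrid.period_dvd_of_forall_eq (hn : ∀ k, 2 ≤ n k) (ha : ∀ k, a k ≠ a (k + 1)) {k : ℕ}
    {f g : ℤ → A} (hf : IsGrid a n (k + 1) f) (hg : IsGrid a n (k + 1) g) {c d L : ℤ}
    (hc : (c + L) % 2 = 1) (hL : period n (k + 1) ≤ L)
    (h : ∀ t ∈ centeredInterval c L, f t = g (t + d)) : period n k ∣ d := by
  induction k with
  | zero => exact period_zero (n := n) ▸ one_dvd d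
  | succ k ih =>
    have h2 := two_mul_period_le hn (k + 1)
    have hpos := period_pos hn (k + 1)
    have hd := ih (hf.mono (Nat.le_succ _)) (hg.mono (Nat.le_succ _)) (by omega)
    by_contra hd'
    obtain ⟨t, htI, ht, ht'⟩ := exists_mem_centeredInterval_dvd_not_dvd hn (h2.trans hL) hc
    have hgt : g (t + d) = a k := (hg.mono (Nat.le_succ _)).apply_add_eq hn ht hd hd'
    have hft : f t = a (k + 1) := (hf t ht').trans (toeplitzSeq_eq hn ht ht')
    exact ha k (hgt.symm.trans ((h t htI).symm.trans hft))

/-! ### The palindromes -/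

/-- The periodic sequence `⋯ p (k-1) a_k p (k-1) a_k p (k-1) ⋯`, with the letters `a_k` at the
multiples of `period n k`. -/
noncomputable def periodicSeq (a : ℕ → A) (n : ℕ → ℕ) (k : ℕ) (t : ℤ) : A :=
  if period n k ∣ t then a k else toeplitzSeq a n t

/-- The palindrome of odd length `L` centred at the hole of the Toeplitz sequence, which is filled
with `x`. -/
noncomputable def letterWord (a : ℕ → A) (n : ℕ → ℕ) (x : A) (L : ℕ) : List A :=
  centeredWord (Function.update (toeplitzSeq a n) 0 x) 0 L

/-- The palindrome of length `L` in `periodicSeq a n k` with centre `period n k * e / 2`, for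
`period n k * e + L` odd. The centre is a letter `a_k` if `e` is even, and the centre of a copy of
`p (k-1)` if `e` is odd. -/
noncomputable def gridWord (a : ℕ → A) (n : ℕ → ℕ) (k : ℕ) (e : ℤ) (L : ℕ) : List A :=
  centeredWord (periodicSeq a n k) (period n k * e) L

lemma isGrid_periodicSeq (a : ℕ → A) (n : ℕ → ℕ) (k : ℕ) : IsGrid a n k (periodicSeq a n k) :=
  fun _ ht => if_neg ht

lemma isGrid_update_toeplitzSeq (a : ℕ → A) (n : ℕ → ℕ) (x : A) (k : ℕ) :
    IsGrid a n k (Function.update (toeplitzSeq a n) 0 x) :=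
  fun _ ht => Function.update_of_ne (by rintro rfl; exact ht (dvd_zero _)) _ _

lemma periodicSeq_neg (a : ℕ → A) (n : ℕ → ℕ) (k : ℕ) (t : ℤ) :
    periodicSeq a n k (-t) = periodicSeq a n k t := by
  simp only [periodicSeq, dvd_neg, toeplitzSeq_neg]

lemma periodicSeq_add (hn : ∀ k, 2 ≤ n k) {k : ℕ} (t : ℤ) {d : ℤ} (hd : period n k ∣ d) :
    periodicSeq a n k (t + d) = periodicSeq a n k t := by
  simp only [periodicSeq, dvd_add_left hd]
  split_ifs with ht
  · rfl
  · exact toeplitzSeq_add hn ht hd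

lemma toeplitzSeq_eq_periodicSeq (hn : ∀ k, 2 ≤ n k) {k : ℕ} {t : ℤ}
    (ht : ¬ period n (k + 1) ∣ t) : toeplitzSeq a n t = periodicSeq a n k t := by
  rw [periodicSeq]
  split_ifs with hk
  · exact toeplitzSeq_eq hn hk ht
  · rfl

lemma update_toeplitzSeq_eq_periodicSeq (hn : ∀ k, 2 ≤ n k) {k : ℕ} {t : ℤ}
    (ht : |t| < period n (k + 1)) :
    Function.update (toeplitzSeq a n) 0 (a k) t = periodicSeq a n k t := by
  obtain rfl | h0 := eq_or_ne t 0
  · simp [periodicSeq]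
  · rw [Function.update_of_ne h0,
      toeplitzSeq_eq_periodicSeq hn fun h => h0 (Int.eq_zero_of_abs_lt_dvd h ht)]

lemma toeplitzSeq_add_eq_update (hn : ∀ k, 2 ≤ n k) {k : ℕ} {s t : ℤ} (hs : period n k ∣ s)
    (ht : |t| < period n k) :
    toeplitzSeq a n (t + s) = Function.update (toeplitzSeq a n) 0 (toeplitzSeq a n s) t := by
  obtain rfl | h0 := eq_or_ne t 0
  · simp
  · rw [Function.update_of_ne h0,
      toeplitzSeq_add hn (fun h => h0 (Int.eq_zero_of_abs_lt_dvd h ht)) hs]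

lemma reverse_letterWord (a : ℕ → A) (n : ℕ → ℕ) (x : A) {L : ℕ} (hL : L % 2 = 1) :
    (letterWord a n x L).reverse = letterWord a n x L := by
  refine (reverse_centeredWord_eq_iff (by omega)).2 fun t _ => ?_
  simp only [Function.update_apply, zero_sub, neg_eq_zero, toeplitzSeq_neg]

lemma reverse_gridWord (hn : ∀ k, 2 ≤ n k) {k : ℕ} {e : ℤ} {L : ℕ}
    (hL : (period n k * e + L) % 2 = 1) :
    (gridWord a n k e L).reverse = gridWord a n k e L := by
  refine (reverse_centeredWord_eq_iff hL).2 fun t _ => ?_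
  rw [sub_eq_neg_add, periodicSeq_add hn _ (dvd_mul_right _ _), periodicSeq_neg]

lemma gridWord_add_two_mul (hn : ∀ k, 2 ≤ n k) {k : ℕ} {e : ℤ} {L : ℕ}
    (hL : (period n k * e + L) % 2 = 1) (f : ℤ) :
    gridWord a n k (e + 2 * f) L = gridWord a n k e L := by
  rw [gridWord, gridWord, mul_add, mul_left_comm, eq_comm, centeredWord_eq_iff hL]
  exact fun t _ => (periodicSeq_add hn t (dvd_mul_right _ _)).symm

lemma letterWord_eq_gridWord (hn : ∀ k, 2 ≤ n k) {k L : ℕ} (hL : L % 2 = 1)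
    (hlt : L < 2 * period n (k + 1)) : letterWord a n (a k) L = gridWord a n k 0 L := by
  rw [letterWord, gridWord, mul_zero, centeredWord_eq_iff_eqOn (by omega)]
  rintro t ⟨h1, h2⟩
  exact update_toeplitzSeq_eq_periodicSeq hn (abs_lt.2 ⟨by omega, by omega⟩)

lemma centeredWord_toeplitzSeq_eq_letterWord (hn : ∀ k, 2 ≤ n k) {k L : ℕ} {s : ℤ}
    (hs : period n k ∣ s) (hL : L % 2 = 1) (hlt : L < 2 * period n k) :
    centeredWord (toeplitzSeq a n) (2 * s) L = letterWord a n (toeplitzSeq a n s) L := by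
  rw [letterWord, ← zero_add (2 * s), eq_comm, centeredWord_eq_iff (by omega)]
  rintro t ⟨h1, h2⟩
  exact (toeplitzSeq_add_eq_update hn hs (abs_lt.2 ⟨by omega, by omega⟩)).symm

/-! ### Distinctness of the palindromes -/

lemma letterWord_injective (a : ℕ → A) (n : ℕ → ℕ) {L : ℕ} (hL : L % 2 = 1) :
    Function.Injective fun x => letterWord a n x L := by
  intro x y h
  have h0 := (centeredWord_eq_iff_eqOn (by omega)).1 h (x := 0) ⟨by omega, by omega⟩
  simpa only [Function.update_self] using h0

/-- The separating letters of `periodicSeq a n k` are `a k` and not `a (k-1)`, as they would have to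
be in a position that is not aligned. -/
lemma period_dvd_of_centeredWord_periodicSeq_eq (hn : ∀ k, 2 ≤ n k) (ha : ∀ k, a k ≠ a (k + 1))
    {k : ℕ} {g : ℤ → A} (hg : IsGrid a n k g) {c d : ℤ} {L : ℕ} (hc : (c + L) % 2 = 1)
    (hL : period n k ≤ L)
    (h : centeredWord (periodicSeq a n k) c L = centeredWord g (c + 2 * d) L) :
    period n k ∣ d := by
  rw [centeredWord_eq_iff hc] at h
  obtain _ | k := k
  · exact period_zero (n := n) ▸ one_dvd d
  · have hd := (isGrid_periodicSeq a n _).period_dvd_of_forall_eq hn ha hg hc hL h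
    by_contra hd'
    obtain ⟨t, htI, ht⟩ := exists_mem_centeredInterval_dvd (period_pos hn (k + 1)) hL hc
    have hgt : a (k + 1) = g (t + d) := (if_pos ht).symm.trans (h t htI)
    exact ha k (hgt.trans (hg.apply_add_eq hn ht hd hd')).symm

lemma gridWord_one_ne_letterWord (hn : ∀ k, 2 ≤ n k) (ha : ∀ k, a k ≠ a (k + 1)) {k L : ℕ}
    (hL : period n k ≤ L) (hodd : L % 2 = 1) (hodd' : (L + period n k) % 2 = 1) (x : A) :
    gridWord a n k 1 L ≠ letterWord a n x L := by
  intro h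
  have hpos := period_pos hn k
  -- the two centres differ by half a period
  obtain ⟨d, hd⟩ : ∃ d, period n k + 2 * d = 0 := ⟨-(period n k / 2), by omega⟩
  have hdvd : period n k ∣ d := by
    refine period_dvd_of_centeredWord_periodicSeq_eq hn ha (isGrid_update_toeplitzSeq a n x k)
      (c := period n k) (by omega) hL ?_
    rwa [hd, ← mul_one (period n k)]
  have := Int.eq_zero_of_abs_lt_dvd hdvd (abs_lt.2 ⟨by omega, by omega⟩)
  omega

lemma gridWord_one_ne_gridWord_one_succ (hn : ∀ k, 2 ≤ n k) (ha : ∀ k, a k ≠ a (k + 1)) {k L : ℕ}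
    (hL : period n (k + 1) ≤ L) (hodd : (L + period n k) % 2 = 1)
    (hodd' : (L + period n (k + 1)) % 2 = 1) :
    gridWord a n (k + 1) 1 L ≠ gridWord a n k 1 L := by
  intro h
  have hpos := period_pos hn k
  have h2 := two_mul_period_le hn k
  obtain ⟨d, hd⟩ : ∃ d, period n (k + 1) = period n k + 2 * d :=
    ⟨(period n (k + 1) - period n k) / 2, by omega⟩
  rw [gridWord, gridWord, mul_one, mul_one, hd, eq_comm] at h
  have hdvd := period_dvd_of_centeredWord_periodicSeq_eq hn ha
    ((isGrid_periodicSeq a n (k + 1)).mono k.le_succ) (by omega) (by omega) h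
  obtain ⟨t, ⟨h1, h3⟩, ht⟩ := exists_mem_centeredInterval_dvd (c := period n (k + 1))
    (period_pos hn (k + 1)) hL (by omega)
  have hdvd' : period n k ∣ t - d := dvd_sub ((period_dvd_period k.le_succ).trans ht) hdvd
  have hval := (centeredWord_eq_iff (by omega)).1 h (t - d) ⟨by omega, by omega⟩
  rw [sub_add_cancel, periodicSeq, periodicSeq, if_pos hdvd', if_pos ht] at hval
  exact ha k hval

/-! ### Which of the palindromes occur -/

/-- For `L ≤ |p_k|`, the palindrome `gridWord a n k e L` is a factor of `p_k`: either its centre can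
be matched with that of `p_k`, or it is short enough to be shifted by half a period. -/
def Fits (n : ℕ → ℕ) (k : ℕ) (e : ℤ) (L : ℕ) : Prop :=
  (e + n k) % 2 = 0 ∨ L + period n k < period n (k + 1)

lemma Fits.exists_centre (hn : ∀ k, 2 ≤ n k) {k : ℕ} {e : ℤ} {L : ℕ} (h : Fits n k e L)
    (hL : L < period n (k + 1)) :
    ∃ f, L < period n k * (e + 2 * f) ∧ period n k * (e + 2 * f) + L < 2 * period n (k + 1) := by
  have hpos := period_pos hn k
  by_cases hp : (e + n k) % 2 = 0
  · refine ⟨(n k - e) / 2, ?_⟩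
    rw [show e + 2 * ((n k - e) / 2) = n k by omega, ← period_succ]
    omega
  · refine ⟨(n k - 1 - e) / 2, ?_⟩
    have hshort := h.resolve_left hp
    rw [show e + 2 * ((n k - 1 - e) / 2) = n k - 1 by omega, mul_sub_one, ← period_succ]
    omega

lemma fits_of_forall_not_dvd (hn : ∀ k, 2 ≤ n k) {k : ℕ} {e : ℤ} {L : ℕ}
    (hL : (period n k * e + L) % 2 = 1)
    (h : ∀ t ∈ centeredInterval (period n k * e) L, ¬ period n (k + 1) ∣ t) : Fits n k e L := by
  by_contra hfit
  obtain ⟨hpar, hlen⟩ : (e + n k) % 2 ≠ 0 ∧ period n (k + 1) ≤ L + period n k := by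
    simpa only [Fits, not_or, not_lt] using hfit
  obtain ⟨q, g, rfl, hg1, hg2⟩ : ∃ q g : ℤ,
      e = 2 * (n k * q) + g ∧ 1 - n k ≤ g ∧ g ≤ n k - 1 := by
    have hn0 : (0 : ℤ) < 2 * n k := by have := hn k; omega
    have hdiv := Int.mul_ediv_add_emod (e + n k) (2 * n k)
    rw [mul_assoc] at hdiv
    have := Int.emod_nonneg (e + n k) hn0.ne'
    have := Int.emod_lt_of_pos (e + n k) hn0
    exact ⟨(e + n k) / (2 * n k), (e + n k) % (2 * n k) - n k, by omega, by omega,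
      by omega⟩
  have hcentre : period n k * (2 * (n k * q) + g) =
      2 * (period n (k + 1) * q) + period n k * g := by rw [period_succ]; ring
  have hg1' := mul_le_mul_of_nonneg_left hg1 (period_pos hn k).le
  have hg2' := mul_le_mul_of_nonneg_left hg2 (period_pos hn k).le
  rw [mul_one_sub, ← period_succ] at hg1'
  rw [mul_sub_one, ← period_succ] at hg2'
  exact h (period n (k + 1) * q) ⟨by omega, by omega⟩ (dvd_mul_right _ _)

lemma gridWord_mem_of_fits (hn : ∀ k, 2 ≤ n k) {k : ℕ} {e : ℤ} {L : ℕ}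
    (hL : (period n k * e + L) % 2 = 1) (hlt : L < period n (k + 1)) (h : Fits n k e L) :
    gridWord a n k e L ∈ ToeplitzLang a n := by
  obtain ⟨f, h1, h2⟩ := h.exists_centre hn hlt
  rw [← gridWord_add_two_mul hn hL f, gridWord]
  refine centeredWord_mem_toeplitzLang hn (d := 0) ?_ (by omega) fun t ⟨ht1, ht2⟩ => ?_
  · rw [mul_add, mul_left_comm]
    omega
  · rw [add_zero]
    refine (toeplitzSeq_eq_periodicSeq hn fun hd => ?_).symm
    have := Int.le_of_dvd (by omega) hd
    omega

lemma letterWord_mem (hn : ∀ k, 2 ≤ n k) {k L : ℕ} {x : A} (hx : x ∈ Ak a k) (hL : L % 2 = 1)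
    (hlt : L < 2 * period n k) : letterWord a n x L ∈ ToeplitzLang a n := by
  obtain ⟨j, hj, rfl⟩ := hx
  have hdvd := period_dvd_period (n := n) hj
  have := Int.le_of_dvd (period_pos hn j) hdvd
  rw [← toeplitzSeq_period (a := a) hn j, ← centeredWord_toeplitzSeq_eq_letterWord hn hdvd hL hlt]
  exact centeredWord_mem_toeplitzLang hn (d := 0) (by omega) (by omega) fun t _ => by rw [add_zero]

lemma gridWord_one_mem (hn : ∀ k, 2 ≤ n k) {k L : ℕ} (hx : a k ∈ Ak a (k + 1))
    (hL : (L + period n k) % 2 = 1) (hlt : L + period n k < 2 * period n (k + 1)) :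
    gridWord a n k 1 L ∈ ToeplitzLang a n := by
  obtain ⟨j, hj, hjk⟩ := hx
  have hdvd := period_dvd_period (n := n) hj
  have := Int.le_of_dvd (period_pos hn j) hdvd
  have hpos := period_pos hn k
  rw [gridWord, mul_one]
  refine centeredWord_mem_toeplitzLang hn (d := period n j) (by omega) (by omega)
    fun t ⟨h1, h2⟩ => ?_
  have ht : |t| < period n (k + 1) := abs_lt.2 ⟨by omega, by omega⟩
  rw [toeplitzSeq_add_eq_update hn hdvd ht, toeplitzSeq_period hn, hjk,
    update_toeplitzSeq_eq_periodicSeq hn ht]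

/-! ### Classification of the palindromes -/

lemma toeplitzSeq_eq_of_forall_symm (hn : ∀ k, 2 ≤ n k) {k : ℕ} {c t L : ℤ}
    (hc : period n k ∣ c) (hL : L < period n (k + 1))
    (hpal : ∀ t ∈ centeredInterval c L, toeplitzSeq a n (c - t) = toeplitzSeq a n t)
    (htI : t ∈ centeredInterval c L) (ht : period n k ∣ t) (htc : 2 * t ≠ c) :
    toeplitzSeq a n t = a k := by
  by_cases ht' : period n (k + 1) ∣ t
  · rw [← hpal t htI]
    refine toeplitzSeq_eq hn (dvd_sub hc ht) fun hd => htc ?_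
    have h0 : c - t - t = 0 := Int.eq_zero_of_abs_lt_dvd (dvd_sub hd ht')
      (abs_lt.2 ⟨by have := htI.1; have := htI.2; omega, by have := htI.1; have := htI.2; omega⟩)
    omega
  · exact toeplitzSeq_eq hn ht ht'

lemma centeredWord_eq_of_period_dvd (hn : ∀ k, 2 ≤ n k) {k L : ℕ} {e : ℤ}
    (hLlt : L < period n (k + 1)) (hL : (period n k * e + L) % 2 = 1) (hlt : L < period n k * e)
    (hpal : ∀ t ∈ centeredInterval (period n k * e) L,
      toeplitzSeq a n (period n k * e - t) = toeplitzSeq a n t) :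
    (L % 2 = 1 ∧ ∃ x ∈ Ak a (k + 1),
      centeredWord (toeplitzSeq a n) (period n k * e) L = letterWord a n x L) ∨
    centeredWord (toeplitzSeq a n) (period n k * e) L = gridWord a n k e L ∧
      (a k ∈ Ak a (k + 1) ∨ Fits n k e L) := by
  by_cases hmid : ∃ s, period n (k + 1) ∣ s ∧ 2 * s = period n k * e
  · obtain ⟨s, hs, hse⟩ := hmid
    have hodd : L % 2 = 1 := by omega
    refine .inl ⟨hodd, toeplitzSeq a n s, toeplitzSeq_mem_Ak hn (by omega) hs, ?_⟩
    rw [← hse, centeredWord_toeplitzSeq_eq_letterWord hn hs hodd (by omega)]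
  · have hgrid : ∀ t ∈ centeredInterval (period n k * e) L, period n (k + 1) ∣ t →
        toeplitzSeq a n t = a k := fun t htI ht =>
      toeplitzSeq_eq_of_forall_symm hn (dvd_mul_right _ _) hLlt hpal htI
        ((period_dvd_period k.le_succ).trans ht) fun h => hmid ⟨t, ht, h⟩
    refine .inr ⟨(centeredWord_eq_iff_eqOn hL).2 fun t htI => ?_, ?_⟩
    · by_cases ht : period n (k + 1) ∣ t
      · rw [hgrid t htI ht, periodicSeq, if_pos ((period_dvd_period k.le_succ).trans ht)]
      · exact toeplitzSeq_eq_periodicSeq hn ht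
    · by_cases hex : ∃ t ∈ centeredInterval (period n k * e) L, period n (k + 1) ∣ t
      · obtain ⟨t, htI, ht⟩ := hex
        exact .inl (hgrid t htI ht ▸ toeplitzSeq_mem_Ak hn (by have := htI.1; omega) ht)
      · exact .inr (fits_of_forall_not_dvd hn hL fun t htI ht => hex ⟨t, htI, ht⟩)

lemma length_add_mul_emod_two_lt (hn : ∀ k, 2 ≤ n k) {k L : ℕ} {e : ℤ}
    (hL : period n (k + 1) ≤ L) (hc : (period n k * e + L) % 2 = 1)
    (h : ∀ t ∈ centeredInterval (period n k * e) L, period n (k + 1) ∣ t → period n (k + 2) ∣ t) :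
    L + period n k * (e % 2) < 2 * period n (k + 1) := by
  have hpos := period_pos hn k
  have hpos' := period_pos hn (k + 1)
  obtain ⟨s, hsI, hs⟩ := exists_mem_centeredInterval_dvd hpos' hL hc
  have hs' := h s hsI hs
  have hleft : s - period n (k + 1) ∉ centeredInterval (period n k * e) L := fun hI =>
    not_period_succ_dvd_period hn (k + 1) ((dvd_sub_right hs').1 (h _ hI (dvd_sub hs dvd_rfl)))
  have hright : s + period n (k + 1) ∉ centeredInterval (period n k * e) L := fun hI =>
    not_period_succ_dvd_period hn (k + 1) ((dvd_add_right hs').1 (h _ hI (dvd_add hs dvd_rfl)))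
  simp only [centeredInterval, Set.mem_ofPred_eq] at hsI hleft hright
  obtain ⟨j, rfl⟩ := (period_dvd_period k.le_succ).trans hs
  obtain ⟨q, b, rfl, hb⟩ : ∃ q b, e = 2 * q + b ∧ (b = 0 ∨ b = 1) :=
    ⟨e / 2, e % 2, by omega, by omega⟩
  have hcentre : period n k * (2 * q + b) =
      2 * (period n k * j) + (2 * (period n k * (q - j)) + period n k * b) := by ring
  obtain rfl | rfl := hb
  · rw [mul_zero] at hcentre
    rw [show (2 * q + 0) % 2 = 0 by omega, mul_zero]
    omega
  · have hdist : 0 ≤ period n k * (q - j) ∨ period n k * (q - j) ≤ period n k * (-1) :=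
      (le_or_gt 0 (q - j)).imp (mul_nonneg hpos.le)
        fun hlt => mul_le_mul_of_nonneg_left (by omega) hpos.le
    rw [mul_one] at hcentre
    rw [show (2 * q + 1) % 2 = 1 by omega, mul_one]
    omega

/-- Without alignment, the symmetry about `c / 2` and the reflection `t ↦ -t` combine to a
translation by `-c`, to which synchronisation applies. -/
lemma centeredWord_eq_of_not_period_dvd (hn : ∀ k, 2 ≤ n k) (ha : ∀ k, a k ≠ a (k + 1))
    {k L : ℕ} {c : ℤ} (hL : period n (k + 1) ≤ L) (hc : (c + L) % 2 = 1) (hlt : L < c)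
    (hpal : ∀ t ∈ centeredInterval c L, toeplitzSeq a n (c - t) = toeplitzSeq a n t)
    (hdvd : ¬ period n (k + 1) ∣ c) :
    a k ∈ Ak a (k + 1) ∧ ∃ e, period n k * e = c ∧
      centeredWord (toeplitzSeq a n) c L = gridWord a n k e L ∧
      L + period n k * (e % 2) < 2 * period n (k + 1) := by
  obtain ⟨e, rfl⟩ : period n k ∣ c := by
    have hgrid := isGrid_toeplitzSeq a n (k + 1)
    refine dvd_neg.1 (hgrid.period_dvd_of_forall_eq hn ha hgrid hc hL fun t ht => ?_)
    rw [← hpal t ht, ← toeplitzSeq_neg, neg_sub, sub_eq_add_neg]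
  have hletter : ∀ t ∈ centeredInterval (period n k * e) L, period n (k + 1) ∣ t →
      toeplitzSeq a n t = a k := fun t htI ht => by
    have hnot : ¬ period n (k + 1) ∣ period n k * e - t := by rwa [dvd_sub_left ht]
    rw [← hpal t htI]
    exact toeplitzSeq_eq hn
      (dvd_sub (dvd_mul_right _ _) ((period_dvd_period k.le_succ).trans ht)) hnot
  have hdvd' : ∀ t ∈ centeredInterval (period n k * e) L, period n (k + 1) ∣ t →
      period n (k + 2) ∣ t := fun t htI ht => by
    by_contra ht'
    exact ha k ((hletter t htI ht).symm.trans (toeplitzSeq_eq hn ht ht'))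
  obtain ⟨s, ⟨hs1, hs2⟩, hs⟩ := exists_mem_centeredInterval_dvd (period_pos hn (k + 1)) hL hc
  refine ⟨hletter s ⟨hs1, hs2⟩ hs ▸ toeplitzSeq_mem_Ak hn (by omega) hs, e, rfl, ?_, ?_⟩
  · refine (centeredWord_eq_iff_eqOn hc).2 fun t htI => ?_
    by_cases ht : period n (k + 1) ∣ t
    · rw [hletter t htI ht, periodicSeq, if_pos ((period_dvd_period k.le_succ).trans ht)]
    · exact toeplitzSeq_eq_periodicSeq hn ht
  · exact length_add_mul_emod_two_lt hn hL hc hdvd'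

lemma exists_eq_of_reverse_eq (hn : ∀ k, 2 ≤ n k) (ha : ∀ k, a k ≠ a (k + 1)) {k : ℕ}
    {u : List A} (hkL : period n k ≤ u.length) (hLk : u.length < period n (k + 1))
    (hu : u ∈ ToeplitzLang a n) (hrev : u.reverse = u) :
    (u.length % 2 = 1 ∧ ∃ x ∈ Ak a (k + 1), u = letterWord a n x u.length) ∨
    (∃ e, (period n k * e + u.length) % 2 = 1 ∧ u = gridWord a n k e u.length ∧
      (a k ∈ Ak a (k + 1) ∨ Fits n k e u.length)) ∨
    ∃ j e, k = j + 1 ∧ (period n j * e + u.length) % 2 = 1 ∧ u = gridWord a n j e u.length ∧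
      a j ∈ Ak a (j + 1) ∧ u.length + period n j * (e % 2) < 2 * period n (j + 1) := by
  obtain ⟨c, hc, hlt, huc⟩ := (mem_toeplitzLang_iff_exists_centeredWord hn).1 hu
  rw [huc, reverse_centeredWord_eq_iff hc] at hrev
  by_cases hdvd : period n k ∣ c
  · obtain ⟨e, rfl⟩ := hdvd
    obtain ⟨hodd, x, hx, hux⟩ | ⟨hue, hocc⟩ := centeredWord_eq_of_period_dvd hn hLk hc hlt hrev
    · exact .inl ⟨hodd, x, hx, huc.trans hux⟩
    · exact .inr (.inl ⟨e, hc, huc.trans hue, hocc⟩)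
  · obtain _ | j := k
    · exact absurd (period_zero (n := n) ▸ one_dvd c) hdvd
    · obtain ⟨hmem, e, rfl, hue, hlen⟩ :=
        centeredWord_eq_of_not_period_dvd hn ha hkL hc hlt hrev hdvd
      exact .inr (.inr ⟨j, e, rfl, hc, huc.trans hue, hmem, hlen⟩)

lemma gridWord_eq_letterWord_or_gridWord_one (hn : ∀ k, 2 ≤ n k) {k L : ℕ} {e : ℤ}
    (hpar : (period n k * e + L) % 2 = 1) (hlt : L < 2 * period n (k + 1)) :
    (e % 2 = 0 ∧ L % 2 = 1 ∧ gridWord a n k e L = letterWord a n (a k) L) ∨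
      (e % 2 = 1 ∧ (L + period n k) % 2 = 1 ∧ gridWord a n k e L = gridWord a n k 1 L) := by
  obtain ⟨f, rfl | rfl⟩ := Int.even_or_odd' e
  · have hodd : L % 2 = 1 := by rw [mul_left_comm] at hpar; omega
    refine .inl ⟨by omega, hodd, ?_⟩
    rw [letterWord_eq_gridWord hn hodd hlt, ← zero_add (2 * f), gridWord_add_two_mul hn (by omega)]
  · have hodd : (L + period n k) % 2 = 1 := by rw [mul_add, mul_left_comm] at hpar; omega
    rw [add_comm, gridWord_add_two_mul hn (by omega)]
    exact .inr ⟨by omega, hodd, rfl⟩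

lemma mem_toeplitzLang_and_reverse_eq_iff (hn : ∀ k, 2 ≤ n k) (ha : ∀ k, a k ≠ a (k + 1))
    {k L : ℕ} (hkL : period n k ≤ L) (hLk : L < period n (k + 1)) {u : List A} :
    (u ∈ ToeplitzLang a n ∧ u.length = L ∧ u.reverse = u) ↔
      (L % 2 = 1 ∧ ∃ x, (x ∈ Ak a (k + 1) ∨ x = a k ∧ Fits n k 0 L) ∧ u = letterWord a n x L) ∨
      ((L + period n k) % 2 = 1 ∧ (a k ∈ Ak a (k + 1) ∨ Fits n k 1 L)) ∧ u = gridWord a n k 1 L ∨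
      ((L + period n (k - 1)) % 2 = 1 ∧ a (k - 1) ∈ Ak a k ∧
        L + period n (k - 1) < 2 * period n k) ∧ u = gridWord a n (k - 1) 1 L := by
  constructor
  · rintro ⟨hu, rfl, hrev⟩
    obtain ⟨hodd, x, hx, hux⟩ | ⟨e, hpar, hue, hocc⟩ | ⟨j, e, rfl, hpar, hue, hmem, hlen⟩ :=
      exists_eq_of_reverse_eq hn ha hkL hLk hu hrev
    · exact .inl ⟨hodd, x, .inl hx, hux⟩
    · obtain ⟨he, hodd, hword⟩ | ⟨he, hodd, hword⟩ :=
        gridWord_eq_letterWord_or_gridWord_one (a := a) hn hpar (by omega)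
      · refine .inl ⟨hodd, a k, hocc.imp_right fun hfit => ⟨rfl, ?_⟩, hue.trans hword⟩
        exact hfit.imp_left (by omega)
      · exact .inr (.inl ⟨⟨hodd, hocc.imp_right (Or.imp_left (by omega))⟩, hue.trans hword⟩)
    · have := mul_nonneg (period_pos hn j).le (Int.emod_nonneg e two_ne_zero)
      obtain ⟨-, hodd, hword⟩ | ⟨he, hodd, hword⟩ :=
        gridWord_eq_letterWord_or_gridWord_one (a := a) hn hpar (by omega)
      · obtain ⟨i, hi, hij⟩ := hmem
        have hne : i ≠ j + 1 := fun h => ha j (by rw [← hij, h])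
        exact .inl ⟨hodd, a j, .inl ⟨i, by omega, hij⟩, hue.trans hword⟩
      · rw [he, mul_one] at hlen
        exact .inr (.inr ⟨⟨hodd, hmem, hlen⟩, hue.trans hword⟩)
  · rintro (⟨hodd, x, hx | ⟨rfl, hfit⟩, rfl⟩ | ⟨⟨hpar, hocc⟩, rfl⟩ | ⟨⟨hpar, hmem, hlt⟩, rfl⟩)
    · exact ⟨letterWord_mem hn hx hodd (by omega), length_centeredWord _ _ _,
        reverse_letterWord a n x hodd⟩
    · refine ⟨?_, length_centeredWord _ _ _, reverse_letterWord a n _ hodd⟩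
      rw [letterWord_eq_gridWord hn hodd (by omega)]
      exact gridWord_mem_of_fits hn (by omega) hLk hfit
    · refine ⟨?_, length_centeredWord _ _ _, reverse_gridWord hn (by omega)⟩
      obtain hmem | hfit := hocc
      · exact gridWord_one_mem hn hmem hpar (by omega)
      · exact gridWord_mem_of_fits hn (by omega) hLk hfit
    · obtain _ | j := k
      · rw [period_zero] at hkL
        rw [Nat.zero_sub, period_zero] at hlt
        omega
      · exact ⟨gridWord_one_mem hn hmem hpar hlt, length_centeredWord _ _ _,
          reverse_gridWord hn (by omega)⟩

/-! ### Counting -/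

lemma insert_Ak_succ (a : ℕ → A) (k : ℕ) : insert (a k) (Ak a (k + 1)) = Ak a k := by
  ext x
  constructor
  · rintro (rfl | ⟨j, hj, rfl⟩)
    · exact ⟨k, le_rfl, rfl⟩
    · exact ⟨j, by omega, rfl⟩
  · rintro ⟨j, hj, rfl⟩
    obtain rfl | hlt := hj.eq_or_lt
    · exact .inl rfl
    · exact .inr ⟨j, hlt, rfl⟩

open Classical in
lemma ncard_setOf_mem_or_eq_and {α : Type*} {s : Set α} {y : α} (hs : s.Finite) (p : Prop) :
    ({x | x ∈ s ∨ x = y ∧ p}.ncard : ℤ) = (insert y s).ncard - if y ∈ s ∨ p then 0 else 1 := by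
  split_ifs with h
  · have hset : {x | x ∈ s ∨ x = y ∧ p} = insert y s := by
      ext x
      rw [Set.mem_ofPred_eq, Set.mem_insert_iff]
      exact ⟨fun hx => hx.symm.imp_left And.left, by rintro (rfl | hx) <;> tauto⟩
    rw [hset, sub_zero]
  · obtain ⟨hy, hp⟩ := not_or.1 h
    simp [hp, Set.ncard_insert_of_notMem hy hs]

open Classical in
lemma ncard_setOf_and_exists_mem_eq {α β : Type*} {p : Prop} {f : α → β}
    (hf : p → Function.Injective f) (s : Set α) :
    {u | p ∧ ∃ x ∈ s, u = f x}.ncard = if p then s.ncard else 0 := by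
  split_ifs with hp
  · rw [← Set.ncard_image_of_injective s (hf hp)]
    simp only [hp, true_and, Set.image, eq_comm]
  · simp [hp]

open Classical in
lemma ncard_setOf_and_eq {α : Type*} (p : Prop) (b : α) :
    {u | p ∧ u = b}.ncard = if p then 1 else 0 := by
  split_ifs with hp <;> simp [hp]

open Classical in
lemma ncard_setOf_image_or_eq_or_eq {α β : Type*} {P p q : Prop} {X : Set α} {f : α → β} {b c : β}
    (hX : X.Finite) (hf : P → Function.Injective f) (hb : P → p → ∀ x, f x ≠ b)
    (hc : P → q → ∀ x, f x ≠ c) (hbc : p → q → b ≠ c) :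
    {u | (P ∧ ∃ x ∈ X, u = f x) ∨ p ∧ u = b ∨ q ∧ u = c}.ncard =
      (if P then X.ncard else 0) + (if p then 1 else 0) + (if q then 1 else 0) := by
  have hXfin : {u | P ∧ ∃ x ∈ X, u = f x}.Finite := by
    refine (hX.image f).subset ?_
    rintro _ ⟨-, x, hx, rfl⟩
    exact ⟨x, hx, rfl⟩
  have hbfin : {u | p ∧ u = b}.Finite := (Set.finite_singleton b).subset fun u hu => hu.2
  have hcfin : {u | q ∧ u = c}.Finite := (Set.finite_singleton c).subset fun u hu => hu.2
  have hdisj : Disjoint {u | p ∧ u = b} {u | q ∧ u = c} := by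
    rw [Set.disjoint_left]
    rintro u ⟨hp, rfl⟩ ⟨hq, h⟩
    exact hbc hp hq h
  have hdisj' : Disjoint {u | P ∧ ∃ x ∈ X, u = f x} ({u | p ∧ u = b} ∪ {u | q ∧ u = c}) := by
    rw [Set.disjoint_left]
    rintro _ ⟨hP, x, -, rfl⟩ (⟨hp, h⟩ | ⟨hq, h⟩)
    · exact hb hP hp x h
    · exact hc hP hq x h
  rw [Set.ofPred_or, Set.ofPred_or, Set.ncard_union_eq hdisj' hXfin (hbfin.union hcfin),
    Set.ncard_union_eq hdisj hbfin hcfin, ncard_setOf_and_eq, ncard_setOf_and_eq,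
    ncard_setOf_and_exists_mem_eq hf, ← add_assoc]

open Classical in
lemma palCmpl_eq (hn : ∀ k, 2 ≤ n k) (ha : ∀ k, a k ≠ a (k + 1)) {k L : ℕ}
    (hfin : (Ak a k).Finite) (hkL : period n k ≤ L) (hLk : L < period n (k + 1)) :
    (palCmpl a n L : ℤ) =
      (if L % 2 = 1 then
        (Ak a k).ncard - (if a k ∈ Ak a (k + 1) ∨ Fits n k 0 L then 0 else 1 : ℤ) else 0) +
      (if (L + period n k) % 2 = 1 ∧ (a k ∈ Ak a (k + 1) ∨ Fits n k 1 L) then 1 else 0) +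
      (if (L + period n (k - 1)) % 2 = 1 ∧ a (k - 1) ∈ Ak a k ∧
        L + period n (k - 1) < 2 * period n k then 1 else 0) := by
  have hAk := insert_Ak_succ a k
  have hfin_succ : (Ak a (k + 1)).Finite := hfin.subset (hAk ▸ Set.subset_insert _ _)
  have hXfin : {x | x ∈ Ak a (k + 1) ∨ x = a k ∧ Fits n k 0 L}.Finite :=
    hfin.subset fun x hx => hAk ▸ hx.symm.imp_left And.left
  have hpred : period n (k - 1) ≤ L :=
    (Int.le_of_dvd (period_pos hn k) (period_dvd_period k.pred_le)).trans hkL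
  have hne : (L + period n k) % 2 = 1 → (L + period n (k - 1)) % 2 = 1 →
      L + period n (k - 1) < 2 * period n k →
      gridWord a n k 1 L ≠ gridWord a n (k - 1) 1 L := fun hp hq hlt => by
    obtain _ | j := k
    · rw [period_zero] at hkL
      rw [Nat.zero_sub, period_zero] at hlt
      omega
    · exact gridWord_one_ne_gridWord_one_succ hn ha hkL hq hp
  simp only [palCmpl, mem_toeplitzLang_and_reverse_eq_iff hn ha hkL hLk]
  refine (congrArg Nat.cast (ncard_setOf_image_or_eq_or_eq hXfin
    (fun hodd => letterWord_injective a n hodd)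
    (fun hodd hp x => (gridWord_one_ne_letterWord hn ha hkL hodd hp.1 x).symm)
    (fun hodd hq x => (gridWord_one_ne_letterWord hn ha hpred hodd hq.1 x).symm)
    (fun hp hq => hne hp.1 hq.1 hq.2.2))).trans ?_
  push_cast
  rw [ncard_setOf_mem_or_eq_and hfin_succ, hAk]

/-! ### The closed formula -/

lemma mod_mod_two_add_sub_mod_two {m : ℕ} (hm : 0 < m) (L : ℕ) :
    L % m % 2 + (m - L % m) % 2 = L % 2 + (L + m) % 2 := by
  have hr := Nat.mod_lt L hm
  obtain heven | hodd := Nat.mod_two_eq_zero_or_one m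
  · have := Nat.mod_mod_of_dvd L (Nat.dvd_of_mod_eq_zero heven)
    omega
  · omega

lemma sub_mod_mod_two {m N L : ℕ} (h : m * N ≤ L + m) (h' : L < m * N) :
    (m - L % m) % 2 = if N % 2 = 0 then L % 2 else (L + m) % 2 := by
  obtain _ | N := N
  · omega
  rw [mul_add_one] at h h'
  have hr : L % m = L - m * N := by
    rw [Nat.mod_eq_sub_mul_div]
    congr 2
    exact Nat.div_eq_of_lt_le (by rw [mul_comm]; omega) (by rw [add_one_mul, mul_comm]; omega)
  have hpar : m * N % 2 = m % 2 * (N % 2) % 2 := Nat.mul_mod _ _ _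
  obtain hN | hN := Nat.mod_two_eq_zero_or_one N
  · rw [hN, mul_zero] at hpar
    rw [if_neg (by omega)]
    omega
  · rw [hN, mul_one] at hpar
    rw [if_pos (by omega)]
    omega

open Classical in
lemma counts_eq_closed_formula {m N L : ℕ} {S : ℤ} {p : Prop} (hL : L < m * N) :
    (if L % 2 = 1 then S - (if p ∨ N % 2 = 0 ∨ L + m < m * N then 0 else 1 : ℤ) else 0) +
      (if (L + m) % 2 = 1 ∧ (p ∨ (1 + N) % 2 = 0 ∨ L + m < m * N) then 1 else 0) =
    (S - 1) * (L % 2 : ℕ) + ((m - L % m) % 2 : ℕ) +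
      (L % m % 2 : ℕ) * (if L + m < m * N then 1 else if p then 1 else 0) := by
  have hm : 0 < m := Nat.pos_of_ne_zero (by rintro rfl; simp at hL)
  have hite (x : ℕ) (z : ℤ) : (if x % 2 = 1 then z else 0) = z * (x % 2 : ℕ) := by
    obtain hx | hx := Nat.mod_two_eq_zero_or_one x <;> simp [hx]
  have hsum : ((L % m % 2 : ℕ) : ℤ) + ((m - L % m) % 2 : ℕ) = (L % 2 : ℕ) + ((L + m) % 2 : ℕ) := by
    exact_mod_cast mod_mod_two_add_sub_mod_two hm L
  rw [hite, ite_and, hite]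
  by_cases hall : p ∨ L + m < m * N
  · rw [if_pos (by tauto), if_pos (by tauto), ← ite_or, if_pos (by tauto)]
    linear_combination -hsum
  · obtain ⟨hp, hlt⟩ := not_or.1 hall
    have hsub := sub_mod_mod_two (not_lt.1 hlt) hL
    simp only [hp, hlt, false_or, or_false, if_false]
    obtain hN | hN := Nat.mod_two_eq_zero_or_one N
    · rw [if_pos hN] at hsub
      rw [if_pos hN, if_neg (by omega), hsub]
      ring
    · rw [if_neg (by omega)] at hsub
      rw [if_neg (by omega), if_pos (by omega), hsub]
      ring

end SimpleToeplitz

open Classical SimpleToeplitz in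
theorem stmt12_general {A : Type*} (a : ℕ → A) (n : ℕ → ℕ) (hn : ∀ k, 2 ≤ n k)
    (ha : ∀ k, a k ≠ a (k + 1)) (k : ℕ) (hfin : (Ak a k).Finite) (L : ℕ)
    (hkL : lenPrev a n k + 1 ≤ L) (hLk : L ≤ (ToeplitzBlock a n k).length) :
    (palCmpl a n L : ℤ) =
      (((Ak a k).ncard : ℤ) - 1) * ((L % 2 : ℕ) : ℤ)
        + (((lenPrev a n k + 1 - L % (lenPrev a n k + 1)) % 2 : ℕ) : ℤ)
        + ((L % (lenPrev a n k + 1) % 2 : ℕ) : ℤ) *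
            (if L + lenPrev a n k + 1 ≤ (ToeplitzBlock a n k).length then 1
             else if a k ∈ Ak a (k + 1) then 1 else 0)
        + (if a (k - 1) ∈ Ak a k ∧ L + lenPrev a n (k - 1) ≤ 2 * lenPrev a n k then
            ((L % (lenPrev a n (k - 1) + 1) % 2 : ℕ) : ℤ)
              + (((lenPrev a n (k - 1) + 1 - L % (lenPrev a n (k - 1) + 1)) % 2 : ℕ) : ℤ)
              - ((L % 2 : ℕ) : ℤ)
           else 0) := by
  have hm := lenPrev_add_one (a := a) hn k
  have hm' := lenPrev_add_one (a := a) hn (k - 1)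
  have hN := length_block_add_one (a := a) hn k
  have hblock : (ToeplitzBlock a n k).length + 1 = (lenPrev a n k + 1) * n k := by
    zify
    rw [hN, period_succ, hm]
  have hpar : (L + period n k) % 2 = 1 ↔ (L + (lenPrev a n k + 1)) % 2 = 1 := by omega
  have hpar' : (L + period n (k - 1)) % 2 = 1 ↔ (L + (lenPrev a n (k - 1) + 1)) % 2 = 1 := by
    omega
  have hfits0 : Fits n k 0 L ↔
      n k % 2 = 0 ∨ L + (lenPrev a n k + 1) < (lenPrev a n k + 1) * n k := by
    rw [Fits]; omega
  have hfits1 : Fits n k 1 L ↔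
      (1 + n k) % 2 = 0 ∨ L + (lenPrev a n k + 1) < (lenPrev a n k + 1) * n k := by
    rw [Fits]; omega
  have hlong : L + period n (k - 1) < 2 * period n k ↔
      L + lenPrev a n (k - 1) ≤ 2 * lenPrev a n k := by omega
  have hshort : L + (lenPrev a n k + 1) < (lenPrev a n k + 1) * n k ↔
      L + lenPrev a n k + 1 ≤ (ToeplitzBlock a n k).length := by omega
  have hsum := mod_mod_two_add_sub_mod_two (lenPrev a n (k - 1)).add_one_pos L
  rw [palCmpl_eq hn ha hfin (by omega) (by omega)]
  simp only [hpar, hpar', hfits0, hfits1, hlong]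
  rw [counts_eq_closed_formula (by omega)]
  simp only [hshort]
  congr 1
  by_cases hrep : a (k - 1) ∈ Ak a k ∧ L + lenPrev a n (k - 1) ≤ 2 * lenPrev a n k
  · simp only [hrep, and_true, if_true]
    split_ifs <;> omega
  · simp only [hrep, and_false, if_false]

/- STATEMENT 12: the palindrome complexity of the simple Toeplitz subshift. -/
open Classical in
theorem stmt12 {A : Type*} [Fintype A] [Nonempty A]
    (a : ℕ → A) (n : ℕ → ℕ) (hn : ∀ k, 2 ≤ n k) (ha : ∀ k, a k ≠ a (k + 1))
    (hAev : 2 ≤ (Aev a).ncard) :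
    (∀ L : ℕ, 1 ≤ L → L ≤ (ToeplitzBlock a n 0).length →
      (palCmpl a n L : ℤ) = (((Ak a 0).ncard : ℤ) - 1) * ((L % 2 : ℕ) : ℤ) + 1) ∧
    (∀ k : ℕ, 1 ≤ k → ∀ L : ℕ,
      lenPrev a n k + 1 ≤ L → L ≤ (ToeplitzBlock a n k).length →
      (palCmpl a n L : ℤ) =
        (((Ak a k).ncard : ℤ) - 1) * ((L % 2 : ℕ) : ℤ)
          + (((lenPrev a n k + 1 - L % (lenPrev a n k + 1)) % 2 : ℕ) : ℤ)
          + ((L % (lenPrev a n k + 1) % 2 : ℕ) : ℤ) *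
              (if L + lenPrev a n k + 1 ≤ (ToeplitzBlock a n k).length then 1
               else if a k ∈ Ak a (k + 1) then 1 else 0)
          + (if a (k - 1) ∈ Ak a k ∧ L + lenPrev a n (k - 1) ≤ 2 * lenPrev a n k then
              ((L % (lenPrev a n (k - 1) + 1) % 2 : ℕ) : ℤ)
                + (((lenPrev a n (k - 1) + 1 - L % (lenPrev a n (k - 1) + 1)) % 2 : ℕ) : ℤ)
                - ((L % 2 : ℕ) : ℤ)
             else 0)) := by
  -- at `k = 0`, where `k - 1 = 0` and `lenPrev a n 0 = 0`, the general formula is the first one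
  refine ⟨fun L hL0 hL => ?_, fun k _ L => stmt12_general a n hn ha k (Set.toFinite _) L⟩
  simpa [lenPrev, Nat.mod_one, Nat.ne_of_gt hL0] using
    stmt12_general a n hn ha 0 (Set.toFinite _) L hL0 hL
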